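/- Let α be an almost periodic minimal homeomorphism of an infinite compact metric space Θ, and let f : Θ × I → Θ × I be an α-forced increasing interval map admitting an f-invariant curve Γ = {(θ, γ(θ)) : θ ∈ Θ} with γ : Θ → int I continuous. Then there exists a topological extension f̂ : Θ × I → Θ × I of f with factor map h from f̂ to f of the form h(θ,x) = (θ, h_θ(x)) such that: (i) f̂ is an α-forced increasing interval map; (ii) all fibre maps h_θ are non-decreasing; (iii) h is injective on the complement of h^{-1}(Γ); (iv) for a countable set of points of Γ the h-preimage is a non-degenerate vertical segment, and for all other points of Γ it is a singleton; (v) h^{-1}(Γ) contains no graph of a continuous curve η : Θ → I; (vi) h^{-1}(Γ) is pinched and contains an almost automorphic minimal set of f̂ which is not almost periodic. -/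

import Mathlib

open Set Function MeasureTheory

noncomputable section

/-- The circle `T¹ = ℝ/ℤ`. -/
abbrev T1 := AddCircle (1 : ℝ)

/-- The `n`-th iterate (`n ∈ ℤ`) of a bijection. -/
def zIter {X : Type*} (g : Equiv.Perm X) (n : ℤ) : X → X := fun x => (g ^ n) x

/-- A set of integers is syndetic if it has bounded gaps. -/
def ZSyndetic (S : Set ℤ) : Prop := ∃ N : ℕ, ∀ n : ℤ, ∃ k ∈ S, |k - n| ≤ (N : ℤ)

/-- A homeomorphism `α` of a metric space is almost periodic if for every `ε > 0` the set
`{n ∈ ℤ | dist(αⁿ, Id) < ε}` is syndetic. -/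
def AlmostPeriodicHomeo {Θ : Type*} [MetricSpace Θ] (α : Θ ≃ₜ Θ) : Prop :=
  ∀ ε > (0 : ℝ), ZSyndetic {n : ℤ | ∀ θ : Θ, dist (zIter α.toEquiv n θ) θ < ε}

/-- A homeomorphism is minimal if every (two-sided) orbit is dense. -/
def MinimalHomeo {Θ : Type*} [TopologicalSpace Θ] (α : Θ ≃ₜ Θ) : Prop :=
  ∀ θ : Θ, Dense (range fun n : ℤ => zIter α.toEquiv n θ)

/-- A self-map `g` of a metric space is almost periodic if its family of iterates
is (uniformly) equicontinuous. -/
def AlmostPeriodicMap {Y : Type*} [MetricSpace Y] (g : Y → Y) : Prop :=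
  ∀ ε > (0 : ℝ), ∃ δ > (0 : ℝ), ∀ y y' : Y, dist y y' < δ → ∀ n : ℕ, dist (g^[n] y) (g^[n] y') < ε

/-- `h` is a factor map (semiconjugacy) from `(X, f)` onto `(Y, g)`:
a continuous surjection with `h ∘ f = g ∘ h`.  Then `(X, f)` is a topological
extension of `(Y, g)`. -/
def IsFactorMap {X Y : Type*} [TopologicalSpace X] [TopologicalSpace Y]
    (f : X → X) (g : Y → Y) (h : X → Y) : Prop :=
  Continuous h ∧ Surjective h ∧ h ∘ f = g ∘ h

/-- A map `h` is almost 1-1 if the set of points of the target having exactly one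
preimage is dense. -/
def AlmostOneOne {X Y : Type*} [TopologicalSpace Y] (h : X → Y) : Prop :=
  Dense {y : Y | ∃! x, h x = y}

/-- A witness that the system `(X, f)` is almost automorphic: an almost periodic
homeomorphism of a compact metric space which is an almost 1-1 factor of `(X, f)`. -/
structure AAWitness {X : Type*} [TopologicalSpace X] (f : X → X) where
  (Y : Type)
  [mY : MetricSpace Y]
  [cY : CompactSpace Y]
  (g : Y ≃ₜ Y)
  (hmap : X → Y)
  (factor : IsFactorMap f (⇑g) hmap)
  (a11 : AlmostOneOne hmap)
  (ap : ∀ ε > (0 : ℝ), ∃ δ > (0 : ℝ), ∀ y y' : Y, dist y y' < δ →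
        ∀ n : ℤ, dist (zIter g.toEquiv n y) (zIter g.toEquiv n y') < ε)

/-- `M` is a minimal set of `f`: nonempty, closed, invariant, and without proper
nonempty closed invariant subsets. -/
def IsMinimalSet {X : Type*} [TopologicalSpace X] (f : X → X) (M : Set X) : Prop :=
  M.Nonempty ∧ IsClosed M ∧ f '' M = M ∧
    ∀ M' ⊆ M, M'.Nonempty → IsClosed M' → f '' M' ⊆ M' → M' = M

/-- The restriction of `f` to an invariant set. -/
def restrictMap {X : Type*} {f : X → X} {M : Set X} (hM : Set.MapsTo f M M) : ↥M → ↥M :=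
  Set.MapsTo.restrict f M M hM

/-- `M` is an almost automorphic minimal set of `f`: `f` restricted to `M` admits an
almost periodic almost 1-1 factor. -/
def IsAAMinimal {X : Type*} [MetricSpace X] (f : X → X) (M : Set X) : Prop :=
  IsMinimalSet f M ∧ ∀ hM : Set.MapsTo f M M, Nonempty (AAWitness (restrictMap hM))

/-- `M` is an almost periodic minimal set of `f`: the family of iterates of the
restriction of `f` to `M` is equicontinuous. -/
def IsAPMinimal {X : Type*} [MetricSpace X] (f : X → X) (M : Set X) : Prop :=
  IsMinimalSet f M ∧ ∀ hM : Set.MapsTo f M M, AlmostPeriodicMap (restrictMap hM)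

/-- A subset of a product is pinched if some fibre is a singleton. -/
def Pinched {Θ X : Type*} (A : Set (Θ × X)) : Prop := ∃ θ : Θ, ∃! x : X, (θ, x) ∈ A

/-- An `α`-forced increasing interval map on `Θ × I`: a continuous skew product over `α`
whose fibre maps are strictly increasing. -/
def ForcedIncreasing {Θ : Type*} [TopologicalSpace Θ] {I : Set ℝ} (α : Θ → Θ)
    (f : Θ × ↥I → Θ × ↥I) : Prop :=
  Continuous f ∧ (∀ p : Θ × ↥I, (f p).1 = α p.1) ∧
    ∀ θ : Θ, StrictMono fun x : ↥I => (f (θ, x)).2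

/-- The fibre of `M ⊆ Θ × I` over `θ`, as a set of reals. -/
def fiberSet {Θ : Type*} {I : Set ℝ} (M : Set (Θ × ↥I)) (θ : Θ) : Set ℝ :=
  (fun x : ↥I => (x : ℝ)) '' {x : ↥I | (θ, x) ∈ M}

/-- The filled-in envelope `[φ⁻_M, φ⁺_M]` of `M`, where `φ⁻_M(θ) = inf M_θ` and
`φ⁺_M(θ) = sup M_θ`. -/
def FilledEnvelope {Θ : Type*} {I : Set ℝ} (M : Set (Θ × ↥I)) : Set (Θ × ↥I) :=
  {p : Θ × ↥I | sInf (fiberSet M p.1) ≤ (p.2 : ℝ) ∧ (p.2 : ℝ) ≤ sSup (fiberSet M p.1)}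

/-- The graph of a curve `γ : Θ → I`. -/
def curveGraph {Θ : Type*} {I : Set ℝ} (γ : Θ → ↥I) : Set (Θ × ↥I) :=
  {p : Θ × ↥I | p.2 = γ p.1}

/-- The conclusion of the blow-up construction (properties (i)-(v) of the main theorem):
`f̂` is a topological extension of `f` via the fibre-respecting factor map `h`, `f̂` is an
`α`-forced increasing interval map, the fibre maps of `h` are non-decreasing, `h` is
injective off `h⁻¹(Γ)`, countably many points of `Γ` have non-degenerate vertical-segment
preimages while all other points of `Γ` have singleton preimages, and `h⁻¹(Γ)` contains
the graph of no continuous curve. -/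
def BlowUpConclusion {Θ : Type*} [TopologicalSpace Θ] {I : Set ℝ}
    (α : Θ → Θ) (f : Θ × ↥I → Θ × ↥I) (γ : Θ → ↥I)
    (fhat : Θ × ↥I → Θ × ↥I) (h : Θ × ↥I → Θ × ↥I) : Prop :=
  IsFactorMap fhat f h ∧ (∀ p : Θ × ↥I, (h p).1 = p.1) ∧
  ForcedIncreasing α fhat ∧
  (∀ θ : Θ, Monotone fun x : ↥I => (h (θ, x)).2) ∧
  Set.InjOn h (h ⁻¹' curveGraph γ)ᶜ ∧
  (∃ C : Set (Θ × ↥I), C ⊆ curveGraph γ ∧ C.Countable ∧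
    (∀ p ∈ C, ∃ x₁ x₂ : ↥I, x₁ < x₂ ∧ h ⁻¹' {p} = {p.1} ×ˢ Set.Icc x₁ x₂) ∧
    (∀ p ∈ curveGraph γ \ C, ∃ x : ↥I, h ⁻¹' {p} = {(p.1, x)})) ∧
  (∀ η : Θ → ↥I, Continuous η → ¬ (curveGraph η ⊆ h ⁻¹' curveGraph γ))

/-!
Let `θₖ = αᵏ(θ₀)` be an orbit of `α` and blow up every point `(θₖ, γ(θₖ))` to a vertical segment.
To do so, choose a function `τ₀ : Θ × I → [0, 1]`, non-decreasing on fibres, whose only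
discontinuity is at `(θ₀, γ(θ₀))`, where it jumps from `0` to `1` along the fibre and oscillates
along `γ`, and put `τₖ = τ₀ ∘ f⁻ᵏ`, having extended `f` to a homeomorphism of `Θ × ℝ` and `τ₀`
accordingly. The graph of `(τₖ)ₖ`, with a vertical segment filled in over each `(θₖ, γ(θₖ))`, is a
compact subset `Z` of `Θ × I × [0, 1]^ℤ`. Its fibres over `Θ` are connected chains, so a strictly
increasing continuous function identifies `Z` with `Θ × I` fibre by fibre. Since `τₖ₊₁ ∘ f = τₖ`,
the map `f` together with the shift of `[0, 1]^ℤ` acts on `Z`; this is `f̂`, and `h` is the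
projection.

A continuous curve in `h⁻¹(Γ)` would force `τ₀` to have a limit along `γ` at `θ₀`. Over the base
points outside the orbit `h⁻¹(Γ)` has singleton fibres, and the closure of their union is a minimal
set on which the projection to `Θ` is almost 1-1. If it were almost periodic, equicontinuity would
make this projection injective, hence a homeomorphism, and its inverse would be a continuous curve
in `h⁻¹(Γ)`.
-/

open Filter Topology

lemma zIter_toEquiv {X : Type*} [TopologicalSpace X] (α : X ≃ₜ X) (n : ℤ) :
    zIter α.toEquiv n = ⇑(α ^ n) := by
  let toPerm : (X ≃ₜ X) →* Equiv.Perm X :=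
    { toFun := Homeomorph.toEquiv, map_one' := rfl, map_mul' := fun _ _ => rfl }
  exact congrArg DFunLike.coe (map_zpow toPerm α n).symm

lemma zpow_rel_iff {X Y : Type*} [TopologicalSpace X] [TopologicalSpace Y]
    {F : X ≃ₜ X} {G : Y ≃ₜ Y} {r : X → Y → Prop} (h : ∀ x y, r (F x) (G y) ↔ r x y) (n : ℤ)
    (x : X) (y : Y) : r ((F ^ n) x) ((G ^ n) y) ↔ r x y := by
  induction n generalizing x y with
  | zero => rfl
  | succ n ih => rw [zpow_add_one, zpow_add_one, Homeomorph.mul_apply, Homeomorph.mul_apply, ih, h]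
  | pred n ih =>
    rw [zpow_sub_one, zpow_sub_one, Homeomorph.mul_apply, Homeomorph.mul_apply, ih, ← h]
    simp only [← Homeomorph.mul_apply, mul_inv_cancel, Homeomorph.one_apply]

lemma AlmostPeriodicHomeo.equicontinuous {Θ : Type*} [MetricSpace Θ] [CompactSpace Θ]
    {α : Θ ≃ₜ Θ} (hα : AlmostPeriodicHomeo α) {ε : ℝ} (hε : 0 < ε) :
    ∃ δ > 0, ∀ θ θ' : Θ, dist θ θ' < δ →
      ∀ n : ℤ, dist (zIter α.toEquiv n θ) (zIter α.toEquiv n θ') < ε := by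
  simp only [AlmostPeriodicHomeo, zIter_toEquiv] at hα ⊢
  obtain ⟨N, hN⟩ := hα (ε / 3) (by positivity)
  have window : UniformEquicontinuous fun j : Icc (-(N : ℤ)) N => ⇑(α ^ (j : ℤ)) :=
    uniformEquicontinuous_finite.2 fun j =>
      CompactSpace.uniformContinuous_of_continuous (α ^ (j : ℤ)).continuous
  obtain ⟨δ, hδ, hwindow⟩ := Metric.uniformEquicontinuous_iff.1 window (ε / 3) (by positivity)
  refine ⟨δ, hδ, fun θ θ' hθ n => ?_⟩
  obtain ⟨k, hk, hkn⟩ := hN n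
  have hmem : n - k ∈ Icc (-(N : ℤ)) N := by rw [abs_le] at hkn; constructor <;> lia
  have split (y : Θ) : (α ^ n) y = (α ^ k) ((α ^ (n - k)) y) := by
    rw [← Homeomorph.mul_apply, ← zpow_add, add_sub_cancel]
  rw [split, split]
  calc dist ((α ^ k) ((α ^ (n - k)) θ)) ((α ^ k) ((α ^ (n - k)) θ'))
      ≤ dist ((α ^ k) ((α ^ (n - k)) θ)) ((α ^ (n - k)) θ)
        + dist ((α ^ (n - k)) θ) ((α ^ (n - k)) θ')
        + dist ((α ^ (n - k)) θ') ((α ^ k) ((α ^ (n - k)) θ')) := dist_triangle4 _ _ _ _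
    _ < ε / 3 + ε / 3 + ε / 3 := by
        refine add_lt_add (add_lt_add (hk _) (hwindow θ θ' hθ ⟨n - k, hmem⟩)) ?_
        rw [dist_comm]
        exact hk _
    _ = ε := by ring

section MinimalBase

variable {Θ : Type*} [TopologicalSpace Θ] {α : Θ ≃ₜ Θ}

lemma MinimalHomeo.symm (hα : MinimalHomeo α) : MinimalHomeo α.symm := fun θ => by
  convert hα θ using 1
  refine (neg_surjective.range_comp _).symm.trans (congrArg range (funext fun n => ?_))
  simp only [comp_apply, zIter_toEquiv, ← inv_zpow']
  rfl

lemma MinimalHomeo.exists_zpow_mem (hα : MinimalHomeo α) (θ : Θ) {U : Set Θ} (hU : IsOpen U)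
    (hne : U.Nonempty) : ∃ n : ℤ, (α ^ n) θ ∈ U := by
  obtain ⟨_, ⟨n, rfl⟩, hn⟩ := (hα θ).exists_mem_open hU hne
  exact ⟨n, by rwa [← zIter_toEquiv]⟩

lemma MinimalHomeo.eq_univ_of_mapsTo [CompactSpace Θ] (hα : MinimalHomeo α) {S : Set Θ}
    (hS : IsClosed S) (hne : S.Nonempty) (hmaps : MapsTo α S S) : S = univ := by
  have hpow (n : ℕ) : IsClosed (⇑(α ^ n) '' S) := (α ^ n).isClosedMap S hS
  obtain ⟨θ, hθ⟩ : (⋂ n : ℕ, ⇑(α ^ n) '' S).Nonempty := by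
    refine IsCompact.nonempty_iInter_of_sequence_nonempty_isCompact_isClosed _ (fun n => ?_)
      (fun n => hne.image _) (hpow 0).isCompact hpow
    rintro _ ⟨θ, hθ, rfl⟩
    exact ⟨α θ, hmaps hθ, by rw [← Homeomorph.mul_apply, ← pow_succ]⟩
  have hback (n : ℕ) : (α ^ (-n : ℤ)) θ ∈ S := by
    obtain ⟨s, hs, rfl⟩ := mem_iInter.1 hθ n
    rwa [← Homeomorph.mul_apply, zpow_neg, zpow_natCast, inv_mul_cancel]
  have hforward (n : ℕ) : (α ^ (n : ℤ)) θ ∈ S := by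
    induction n with
    | zero => exact hback 0
    | succ n ih =>
      rw [Nat.cast_succ, add_comm, zpow_add, zpow_one]
      exact hmaps ih
  by_contra hSuniv
  obtain ⟨n, hn⟩ := hα.exists_zpow_mem θ hS.isOpen_compl (nonempty_compl.2 hSuniv)
  obtain ⟨m, rfl | rfl⟩ := n.eq_nat_or_neg
  exacts [hn (hforward m), hn (hback m)]

lemma MinimalHomeo.exists_iterate_mem [CompactSpace Θ] (hα : MinimalHomeo α) (θ : Θ) {U : Set Θ}
    (hU : IsOpen U) (hne : U.Nonempty) : ∃ n : ℕ, α^[n] θ ∈ U := by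
  have hclosure : closure (range fun n : ℕ => α^[n] θ) = univ := by
    refine hα.eq_univ_of_mapsTo isClosed_closure ⟨θ, subset_closure ⟨0, rfl⟩⟩
      (MapsTo.closure ?_ α.continuous)
    rintro _ ⟨n, rfl⟩
    exact ⟨n + 1, iterate_succ_apply' _ _ _⟩
  obtain ⟨_, ⟨n, rfl⟩, hn⟩ := (dense_iff_closure_eq.2 hclosure).exists_mem_open hU hne
  exact ⟨n, hn⟩

lemma MinimalHomeo.injective_orbit [CompactSpace Θ] [T1Space Θ] [Infinite Θ]
    (hα : MinimalHomeo α) (θ : Θ) : Injective fun n : ℤ => (α ^ n) θ := by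
  refine Injective.of_lt_imp_ne fun m n hmn heq => ?_
  obtain ⟨p, hp⟩ := Int.eq_ofNat_of_zero_le (sub_nonneg.2 hmn.le)
  have hperiodic : (α ^ (p : ℤ)) θ = θ := by
    refine (α ^ m).injective ?_
    rw [← Homeomorph.mul_apply, ← zpow_add, ← hp, add_sub_cancel]
    exact heq.symm
  have horbit : (fun k : ℤ => (α ^ k) θ) '' Ico 0 p = univ := by
    refine hα.eq_univ_of_mapsTo ((finite_Ico _ _).image _).isClosed
      ((nonempty_Ico.2 (by lia)).image _) ?_
    rintro _ ⟨k, hk, rfl⟩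
    rw [← Homeomorph.mul_apply, ← zpow_one_add]
    rcases (Int.add_one_le_iff.2 hk.2).eq_or_lt with hkp | hkp
    · exact ⟨0, ⟨le_rfl, by lia⟩, by rw [add_comm, hkp, hperiodic]; rfl⟩
    · exact ⟨1 + k, ⟨by have := hk.1; lia, by lia⟩, rfl⟩
  exact absurd (horbit ▸ (finite_Ico _ _).image _) infinite_univ

lemma MinimalHomeo.perfectSpace [CompactSpace Θ] [Infinite Θ] (hα : MinimalHomeo α) :
    PerfectSpace Θ := by
  refine perfectSpace_iff_forall_not_isolated.2 fun θ => ⟨fun hθ => ?_⟩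
  have hopen : IsOpen {θ} := isOpen_singleton_iff_punctured_nhds θ |>.2 hθ
  have : DiscreteTopology Θ := discreteTopology_iff_isOpen_singleton.2 fun θ' => by
    obtain ⟨n, hn⟩ := hα.exists_zpow_mem θ' hopen (singleton_nonempty θ)
    rw [← (α ^ n).isOpen_image, image_singleton, mem_singleton_iff.1 hn]
    exact hopen
  exact not_finite_iff_infinite.2 ‹_› finite_of_compact_of_discrete

end MinimalBase

lemma exists_notMem_range_of_countable {ι X : Type*} [Countable ι] [TopologicalSpace X]
    [BaireSpace X] [T1Space X] [PerfectSpace X] [Nonempty X] (u : ι → X) : ∃ x, x ∉ range u := by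
  obtain ⟨x, hx⟩ := (dense_iInter_of_isOpen (fun i => isOpen_compl_singleton (x := u i))
    fun i => dense_compl_singleton (u i)).nonempty
  exact ⟨x, by simpa [eq_comm] using hx⟩

section AlmostOneOneExtension

variable {X Θ : Type*} {F : X → X} {π : X → Θ} {K : Set X}

/-- The points of the base over which the set `K` has exactly one point. -/
def singletonLocus (π : X → Θ) (K : Set X) : Set Θ := {θ | ∃! x, x ∈ K ∧ π x = θ}

/-- The closure of the union of the singleton fibres of `K`. Over a minimal base it is,
if nonempty, the only minimal set in `K`. -/
def singletonFiberClosure [TopologicalSpace X] (π : X → Θ) (K : Set X) : Set X :=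
  closure (K ∩ π ⁻¹' singletonLocus π K)

lemma eq_of_mem_singletonLocus {x y : X} (hx : x ∈ K) (hy : y ∈ K) (hxy : π x = π y)
    (hlocus : π x ∈ singletonLocus π K) : x = y :=
  hlocus.unique ⟨hx, rfl⟩ ⟨hy, hxy.symm⟩

lemma singletonFiberClosure_subset [TopologicalSpace X] (hK : IsClosed K) :
    singletonFiberClosure π K ⊆ K :=
  closure_minimal inter_subset_left hK

lemma existsUnique_mem_singletonFiberClosure [TopologicalSpace X] (hK : IsClosed K) {θ : Θ}
    (hθ : θ ∈ singletonLocus π K) : ∃! x : singletonFiberClosure π K, π x = θ := by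
  obtain ⟨x, ⟨hx, rfl⟩, hunique⟩ := id hθ
  exact ⟨⟨x, subset_closure ⟨hx, hθ⟩⟩, rfl, fun y hy =>
    Subtype.ext (hunique y ⟨singletonFiberClosure_subset hK y.2, hy⟩)⟩

lemma mapsTo_singletonLocus {α : Θ → Θ} (hα : Injective α) (hπ : Semiconj π F α)
    (hFK : F '' K = K) : MapsTo α (singletonLocus π K) (singletonLocus π K) := by
  rintro _ ⟨x, ⟨hx, rfl⟩, hunique⟩
  refine ⟨F x, ⟨hFK ▸ mem_image_of_mem F hx, hπ x⟩, ?_⟩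
  rintro y ⟨hy, hyx⟩
  rw [← hFK] at hy
  obtain ⟨y, hy, rfl⟩ := hy
  exact congrArg F (hunique y ⟨hy, hα ((hπ y).symm.trans hyx)⟩)

lemma mapsTo_singletonFiberClosure [TopologicalSpace X] {α : Θ → Θ} (hα : Injective α)
    (hF : Continuous F) (hπ : Semiconj π F α) (hFK : F '' K = K) :
    MapsTo F (singletonFiberClosure π K) (singletonFiberClosure π K) := by
  refine MapsTo.closure (fun x hx => ⟨hFK ▸ mem_image_of_mem F hx.1, ?_⟩) hF
  rw [mem_preimage, hπ x]
  exact mapsTo_singletonLocus hα hπ hFK hx.2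

lemma MinimalHomeo.dense_singletonLocus [TopologicalSpace Θ] [CompactSpace Θ]
    {α : Θ ≃ₜ Θ} (hα : MinimalHomeo α) (hπ : Semiconj π F α) (hFK : F '' K = K)
    (hne : (singletonLocus π K).Nonempty) : Dense (singletonLocus π K) :=
  dense_iff_closure_eq.2 <| hα.eq_univ_of_mapsTo isClosed_closure hne.closure <|
    (mapsTo_singletonLocus α.injective hπ hFK).closure α.continuous

variable [TopologicalSpace X] [CompactSpace X] [TopologicalSpace Θ] [CompactSpace Θ] [T2Space Θ]
  {α : Θ ≃ₜ Θ}

lemma MinimalHomeo.image_eq_univ (hα : MinimalHomeo α) (hπc : Continuous π) (hπ : Semiconj π F α)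
    {M : Set X} (hM : IsClosed M) (hne : M.Nonempty) (hmaps : MapsTo F M M) : π '' M = univ := by
  refine hα.eq_univ_of_mapsTo (hM.isCompact.image hπc).isClosed (hne.image π) ?_
  rintro _ ⟨x, hx, rfl⟩
  exact ⟨F x, hmaps hx, hπ x⟩

lemma MinimalHomeo.singletonFiberClosure_subset_of_mapsTo (hα : MinimalHomeo α)
    (hπc : Continuous π) (hπ : Semiconj π F α) {M : Set X} (hMK : M ⊆ K) (hM : IsClosed M)
    (hne : M.Nonempty) (hmaps : MapsTo F M M) : singletonFiberClosure π K ⊆ M := by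
  refine closure_minimal (fun x hx => ?_) hM
  obtain ⟨y, hy, hyx⟩ := (hα.image_eq_univ hπc hπ hM hne hmaps).ge (mem_univ (π x))
  exact eq_of_mem_singletonLocus hx.1 (hMK hy) hyx.symm hx.2 ▸ hy

lemma MinimalHomeo.isMinimalSet_singletonFiberClosure [T2Space X] (hα : MinimalHomeo α)
    (hF : Continuous F) (hπc : Continuous π) (hπ : Semiconj π F α) (hK : IsClosed K)
    (hFK : F '' K = K) (hne : (singletonLocus π K).Nonempty) :
    IsMinimalSet F (singletonFiberClosure π K) := by
  have hsub := singletonFiberClosure_subset (π := π) hK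
  have hmaps := mapsTo_singletonFiberClosure α.injective hF hπ hFK
  have hnonempty : (singletonFiberClosure π K).Nonempty := by
    obtain ⟨θ, x, ⟨hx, rfl⟩, hunique⟩ := hne
    exact ⟨x, subset_closure ⟨hx, x, ⟨hx, rfl⟩, hunique⟩⟩
  refine ⟨hnonempty, isClosed_closure, hmaps.image_subset.antisymm ?_, fun M hM hMne hMc hMF => ?_⟩
  · exact hα.singletonFiberClosure_subset_of_mapsTo hπc hπ (hmaps.image_subset.trans hsub)
      (isClosed_closure.isCompact.image hF).isClosed (hnonempty.image F)
      ((mapsTo_image F _).mono_left hmaps.image_subset)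
  · exact hM.antisymm <| hα.singletonFiberClosure_subset_of_mapsTo hπc hπ (hM.trans hsub) hMc hMne
      (mapsTo_iff_image_subset.2 hMF)

end AlmostOneOneExtension

/-- If `π y = π y'`, then following the backward orbits until they are close to a singleton fibre
makes them close to each other, so by equicontinuity `y` and `y'` cannot be apart. -/
lemma MinimalHomeo.injective_of_almostPeriodicMap {Y Θ : Type*} [MetricSpace Y] [CompactSpace Y]
    [TopologicalSpace Θ] [CompactSpace Θ] [T2Space Θ] {α : Θ ≃ₜ Θ} (hα : MinimalHomeo α)
    {G : Y → Y} (hG : AlmostPeriodicMap G) (hGsurj : Surjective G) {π : Y → Θ}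
    (hπc : Continuous π) (hπ : Semiconj π G α) {θ₀ : Θ} (hθ₀ : ∃! y, π y = θ₀) :
    Injective π := by
  intro y y' hyy'
  by_contra hne
  obtain ⟨δ, hδ, hGδ⟩ := hG (dist y y') (dist_pos.2 hne)
  obtain ⟨y₀, -, hy₀⟩ := hθ₀
  have hnear : ∀ᶠ θ in 𝓝 θ₀, ∀ z, π z = θ → dist z y₀ < δ / 2 := by
    refine hπc.isClosedMap.eventually_nhds_fiber θ₀ fun z hz => ?_
    rw [hy₀ z hz]
    exact Metric.ball_mem_nhds y₀ (half_pos hδ)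
  obtain ⟨U, hU, hUopen, hθ₀U⟩ := eventually_nhds_iff.1 hnear
  obtain ⟨n, hn⟩ := hα.symm.exists_iterate_mem (π y) hUopen ⟨θ₀, hθ₀U⟩
  have hback (z : Y) : π z = α.symm^[n] (π (G^[n] z)) := by
    rw [(hπ.iterate_right n).eq z]
    exact (LeftInverse.iterate α.symm_apply_apply n (π z)).symm
  obtain ⟨z, rfl⟩ := hGsurj.iterate n y
  obtain ⟨z', rfl⟩ := hGsurj.iterate n y'
  have hclose : dist z z' < δ := calc
    dist z z' ≤ dist z y₀ + dist z' y₀ := dist_triangle_right _ _ _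
    _ < δ / 2 + δ / 2 := add_lt_add (hU _ hn z (hback z)) (hU _ hn z' (hyy' ▸ hback z'))
    _ = δ := add_halves δ
  exact lt_irrefl _ (hGδ z z' hclose n)

lemma MinimalHomeo.isAAMinimal_singletonFiberClosure {X : Type*} {Θ : Type} [MetricSpace X]
    [CompactSpace X] [MetricSpace Θ] [CompactSpace Θ] {α : Θ ≃ₜ Θ} {F : X → X} {π : X → Θ}
    {K : Set X} (hα : MinimalHomeo α) (hap : AlmostPeriodicHomeo α) (hF : Continuous F)
    (hπc : Continuous π) (hπ : Semiconj π F α) (hK : IsClosed K) (hFK : F '' K = K)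
    (hne : (singletonLocus π K).Nonempty) :
    IsAAMinimal F (singletonFiberClosure π K) := by
  have hmin := hα.isMinimalSet_singletonFiberClosure hF hπc hπ hK hFK hne
  refine ⟨hmin, fun hmaps => ⟨Θ, α, fun x => π x, ⟨by fun_prop, fun θ => ?_, ?_⟩, ?_,
    fun ε hε => hap.equicontinuous hε⟩⟩
  · obtain ⟨x, hx, hxθ⟩ := (hα.image_eq_univ hπc hπ hmin.2.1 hmin.1 hmaps).ge (mem_univ θ)
    exact ⟨⟨x, hx⟩, hxθ⟩
  · exact funext fun x => hπ x
  · exact (hα.dense_singletonLocus hπ hFK hne).mono fun θ hθ =>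
      existsUnique_mem_singletonFiberClosure hK hθ

lemma MinimalHomeo.exists_section_of_isAPMinimal {X Θ : Type*} [MetricSpace X] [CompactSpace X]
    [TopologicalSpace Θ] [CompactSpace Θ] [T2Space Θ] {α : Θ ≃ₜ Θ} {F : X → X} {π : X → Θ}
    {K : Set X} (hα : MinimalHomeo α) (hπc : Continuous π) (hπ : Semiconj π F α) (hK : IsClosed K)
    (hne : (singletonLocus π K).Nonempty) (hAP : IsAPMinimal F (singletonFiberClosure π K)) :
    ∃ s : Θ → X, Continuous s ∧ ∀ θ, s θ ∈ K ∧ π (s θ) = θ := by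
  obtain ⟨⟨hMne, hMc, hFM, -⟩, hAP⟩ := hAP
  have hmaps := mapsTo_iff_image_subset.2 hFM.le
  have : CompactSpace (singletonFiberClosure π K) :=
    isCompact_iff_compactSpace.1 hMc.isCompact
  let ρ : singletonFiberClosure π K → Θ := fun x => π x
  have hρ : Continuous ρ := by fun_prop
  have hsurj : Surjective ρ := fun θ => by
    obtain ⟨x, hx, hxθ⟩ := (hα.image_eq_univ hπc hπ hMc hMne hmaps).ge (mem_univ θ)
    exact ⟨⟨x, hx⟩, hxθ⟩
  obtain ⟨θ₀, hθ₀⟩ := hne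
  have hinj : Injective ρ := hα.injective_of_almostPeriodicMap (hAP hmaps)
    (hmaps.restrict_surjective_iff.2 hFM.ge) hρ (fun x => hπ x)
    (existsUnique_mem_singletonFiberClosure hK hθ₀)
  let e := hρ.homeoOfEquivCompactToT2 (f := Equiv.ofBijective ρ ⟨hinj, hsurj⟩)
  exact ⟨fun θ => e.symm θ, by fun_prop, fun θ =>
    ⟨singletonFiberClosure_subset hK (e.symm θ).2, e.apply_symm_apply θ⟩⟩

section JumpFunction

lemma exists_seq_strictAnti_dist {X : Type*} [MetricSpace X] (x₀ : X) [hx₀ : (𝓝[≠] x₀).NeBot] :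
    ∃ x : ℕ → X, (StrictAnti fun n => dist (x n) x₀) ∧ Tendsto x atTop (𝓝[≠] x₀) := by
  have hdist : Tendsto (dist · x₀) (𝓝[≠] x₀) (𝓝 0) :=
    tendsto_iff_dist_tendsto_zero.1 (tendsto_id.mono_left nhdsWithin_le_nhds)
  have hglb : IsGLB ((dist · x₀) '' {x₀}ᶜ) 0 := by
    refine ⟨forall_mem_image.2 fun x _ => dist_nonneg, fun b hb => ge_of_tendsto hdist ?_⟩
    filter_upwards [self_mem_nhdsWithin] with x hx using hb (mem_image_of_mem _ hx)
  obtain ⟨r, hr_anti, -, hr_lim, hr⟩ := hglb.exists_seq_strictAnti_tendsto_of_notMem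
    (by simp) ((Filter.nonempty_of_mem (f := 𝓝[≠] x₀) self_mem_nhdsWithin).image _)
  choose x hx hxr using hr
  obtain rfl : (fun n => dist (x n) x₀) = r := funext hxr
  exact ⟨x, hr_anti, tendsto_nhdsWithin_iff.2
    ⟨tendsto_iff_dist_tendsto_zero.2 hr_lim, Eventually.of_forall hx⟩⟩

lemma exists_isClosed_frequently_inter_eq_singleton {X : Type*} [MetricSpace X] (x₀ : X)
    [(𝓝[≠] x₀).NeBot] :
    ∃ P Q : Set X, IsClosed P ∧ IsClosed Q ∧ P ∩ Q = {x₀} ∧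
      (∃ᶠ x in 𝓝[≠] x₀, x ∈ P) ∧ ∃ᶠ x in 𝓝[≠] x₀, x ∈ Q := by
  obtain ⟨x, hx_anti, hx⟩ := exists_seq_strictAnti_dist x₀
  have hclosed (φ : ℕ → ℕ) (hφ : Tendsto φ atTop atTop) :
      IsClosed (insert x₀ (range (x ∘ φ))) :=
    ((tendsto_nhdsWithin_iff.1 hx).1.comp hφ).isCompact_insert_range.isClosed
  have hfreq (φ : ℕ → ℕ) (hφ : Tendsto φ atTop atTop) :
      ∃ᶠ y in 𝓝[≠] x₀, y ∈ insert x₀ (range (x ∘ φ)) :=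
    (hx.comp hφ).frequently (Frequently.of_forall fun n => Or.inr ⟨n, rfl⟩)
  have heven : Tendsto (2 * · : ℕ → ℕ) atTop atTop := tendsto_id.const_mul_atTop' two_pos
  have hodd : Tendsto (2 * · + 1 : ℕ → ℕ) atTop atTop :=
    tendsto_atTop_mono (fun n => Nat.le_succ _) heven
  refine ⟨_, _, hclosed _ heven, hclosed _ hodd, ?_, hfreq _ heven, hfreq _ hodd⟩
  have hdisj : Disjoint (range (x ∘ (2 * ·))) (range (x ∘ (2 * · + 1))) := by
    rw [disjoint_range_iff]
    intro m n hmn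
    have := hx_anti.injective (congrArg (dist · x₀) hmn)
    lia
  rw [← insert_inter_distrib, hdisj.inter_eq, insert_empty_eq]

/-- For `a, b ≥ 0`, a monotone step from `0` to `1` in the variable `d`, taking place on `[-a, b]`
(undefined only at `a = b = d = 0`, where the division gives `0`). -/
def stepRatio (a b d : ℝ) : ℝ := max 0 (d + a) / (max 0 (d + a) + max 0 (b - d))

lemma stepRatio_mem_unitInterval (a b d : ℝ) : stepRatio a b d ∈ unitInterval :=
  unitInterval.div_mem (le_max_left _ _) (by positivity) (by simp)

lemma monotone_stepRatio (a b : ℝ) : Monotone (stepRatio a b) := by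
  intro d d' hd
  rcases (le_max_left 0 (d + a)).eq_or_lt with h | h
  · rw [stepRatio, ← h, zero_div]
    exact (stepRatio_mem_unitInterval a b d').1
  · have hu : max 0 (d + a) ≤ max 0 (d' + a) := by gcongr
    have hv : max 0 (b - d') ≤ max 0 (b - d) := by gcongr
    have := le_max_left 0 (b - d')
    have hpos := h.trans_le hu
    rw [stepRatio, stepRatio, div_le_div_iff₀ (by positivity) (by positivity)]
    nlinarith

lemma stepRatio_zero_left {d : ℝ} (b : ℝ) (hd : d ≤ 0) : stepRatio 0 b d = 0 := by
  rw [stepRatio, max_eq_left (by linarith), zero_div]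

lemma stepRatio_zero_right {a d : ℝ} (hd : 0 ≤ d) (had : 0 < d + a) : stepRatio a 0 d = 1 := by
  rw [stepRatio, max_eq_left (by linarith : 0 - d ≤ 0), add_zero, max_eq_right had.le,
    div_self had.ne']

lemma continuousAt_stepRatio {X : Type*} [TopologicalSpace X] {a b d : X → ℝ} {x : X}
    (hac : ContinuousAt a x) (hbc : ContinuousAt b x) (hdc : ContinuousAt d x)
    (ha : 0 ≤ a x) (hb : 0 ≤ b x) (h : a x = 0 → b x = 0 → d x ≠ 0) :
    ContinuousAt (fun y => stepRatio (a y) (b y) (d y)) x := by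
  refine ContinuousAt.div (by fun_prop) (by fun_prop) fun h0 => ?_
  have hu : d x + a x ≤ 0 := by
    linarith [le_max_right 0 (d x + a x), le_max_left 0 (b x - d x)]
  have hv : b x - d x ≤ 0 := by
    linarith [le_max_left 0 (d x + a x), le_max_right 0 (b x - d x)]
  exact h (by linarith) (by linarith) (by linarith)

lemma exists_continuous_nonneg_eq_zero_iff {X : Type*} [PseudoMetricSpace X] {P : Set X}
    (hP : IsClosed P) (hne : P.Nonempty) :
    ∃ A : X → ℝ, Continuous A ∧ (∀ x, 0 ≤ A x) ∧ ∀ {x}, A x = 0 ↔ x ∈ P :=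
  ⟨_, Metric.continuous_infDist_pt P, fun _ => Metric.infDist_nonneg,
    (hP.mem_iff_infDist_zero hne).symm⟩

lemma exists_monotone_jump {Θ : Type*} [MetricSpace Θ] (θ₀ : Θ) [(𝓝[≠] θ₀).NeBot] {γ : Θ → ℝ}
    (hγ : Continuous γ) :
    ∃ τ : Θ × ℝ → unitInterval, ContinuousOn τ {(θ₀, γ θ₀)}ᶜ ∧ (∀ θ, Monotone fun x => τ (θ, x)) ∧
      (∀ x < γ θ₀, τ (θ₀, x) = 0) ∧ (∀ x > γ θ₀, τ (θ₀, x) = 1) ∧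
      ∀ l, ¬ Tendsto (fun θ => τ (θ, γ θ)) (𝓝[≠] θ₀) (𝓝 l) := by
  obtain ⟨P, Q, hP, hQ, hPQ, hPfreq, hQfreq⟩ := exists_isClosed_frequently_inter_eq_singleton θ₀
  have hθ₀ : θ₀ ∈ P ∩ Q := hPQ ▸ mem_singleton θ₀
  obtain ⟨A, hAc, hA, hAP⟩ := exists_continuous_nonneg_eq_zero_iff hP ⟨θ₀, hθ₀.1⟩
  obtain ⟨B, hBc, hB, hBQ⟩ := exists_continuous_nonneg_eq_zero_iff hQ ⟨θ₀, hθ₀.2⟩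
  have hA₀ : A θ₀ = 0 := hAP.2 hθ₀.1
  have hB₀ : B θ₀ = 0 := hBQ.2 hθ₀.2
  have hAB {θ : Θ} (ha : A θ = 0) (hb : B θ = 0) : θ = θ₀ :=
    hPQ.subset ⟨hAP.1 ha, hBQ.1 hb⟩
  let τ (p : Θ × ℝ) : unitInterval :=
    ⟨stepRatio (A p.1) (B p.1) (p.2 - γ p.1), stepRatio_mem_unitInterval _ _ _⟩
  have hτ_zero {θ : Θ} {x : ℝ} (ha : A θ = 0) (hx : x ≤ γ θ) : τ (θ, x) = 0 :=
    Subtype.ext <| (congrArg (stepRatio · (B θ) (x - γ θ)) ha).trans <|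
      stepRatio_zero_left _ (sub_nonpos.2 hx)
  have hτ_one {θ : Θ} {x : ℝ} (hb : B θ = 0) (hx : γ θ ≤ x) (hpos : 0 < x - γ θ + A θ) :
      τ (θ, x) = 1 :=
    Subtype.ext <| (congrArg (stepRatio (A θ) · (x - γ θ)) hb).trans <|
      stepRatio_zero_right (sub_nonneg.2 hx) hpos
  refine ⟨τ, fun p hp => ContinuousAt.continuousWithinAt ?_,
    fun θ x y hxy => monotone_stepRatio _ _ (sub_le_sub_right hxy _),
    fun x hx => hτ_zero hA₀ hx.le, fun x hx => hτ_one hB₀ hx.le (by linarith), fun l hl => ?_⟩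
  · refine IsInducing.subtypeVal.continuousAt_iff.2 (continuousAt_stepRatio (by fun_prop)
      (by fun_prop) (by fun_prop) (hA _) (hB _) fun ha hb hd => hp ?_)
    exact Prod.ext (hAB ha hb) ((sub_eq_zero.1 hd).trans (congrArg γ (hAB ha hb)))
  · have hzero : l = 0 := isClosed_singleton.mem_of_frequently_of_tendsto
      (hPfreq.mono fun θ hθ => hτ_zero (hAP.2 hθ) le_rfl) hl
    have hone : l = 1 := isClosed_singleton.mem_of_frequently_of_tendsto
      ((hQfreq.and_eventually self_mem_nhdsWithin).mono fun θ hθ =>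
        hτ_one (hBQ.2 hθ.1) le_rfl (by
          have := (hA θ).lt_of_ne' fun ha => hθ.2 (hAB ha (hBQ.2 hθ.1))
          linarith)) hl
    exact zero_ne_one (hzero.symm.trans hone)

end JumpFunction

lemma exists_homeomorph_fiberwise {Θ L M : Type*} [TopologicalSpace Θ] [TopologicalSpace L]
    [LinearOrder L] [OrderTopology L] [TopologicalSpace M] [LinearOrder M] [OrderClosedTopology M]
    (α : Θ ≃ₜ Θ) {φ : Θ × L → M} (hφ : Continuous φ) (hmono : ∀ θ, StrictMono fun x => φ (θ, x))
    (hsurj : ∀ θ, Surjective fun x => φ (θ, x)) :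
    ∃ F : Θ × L ≃ₜ Θ × M, ∀ p, F p = (α p.1, φ p) := by
  let e (θ : Θ) : L ≃o M := (hmono θ).orderIsoOfSurjective _ (hsurj θ)
  have hsymm : Continuous fun p : Θ × M => (e p.1).symm p.2 := by
    refine OrderTopology.continuous_iff.2 fun x => ⟨?_, ?_⟩
    · convert isOpen_lt (f := fun p : Θ × M => φ (p.1, x)) (by fun_prop) continuous_snd using 1
      exact Set.ext fun p => (e p.1).lt_symm_apply
    · convert isOpen_lt continuous_snd (g := fun p : Θ × M => φ (p.1, x)) (by fun_prop) using 1
      exact Set.ext fun p => (e p.1).symm_apply_lt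
  let G : Θ × L ≃ₜ Θ × M :=
    { toFun p := (p.1, φ p)
      invFun p := (p.1, (e p.1).symm p.2)
      left_inv p := Prod.ext rfl ((e p.1).symm_apply_apply p.2)
      right_inv p := Prod.ext rfl ((e p.1).apply_symm_apply p.2)
      continuous_toFun := by fun_prop
      continuous_invFun := by fun_prop }
  exact ⟨G.trans (α.prodCongr (Homeomorph.refl M)), fun p => rfl⟩

lemma ForcedIncreasing.exists_homeomorph_extension {Θ : Type*} [TopologicalSpace Θ] {a b : ℝ}
    (hab : a ≤ b) {α : Θ ≃ₜ Θ} {f : Θ × Icc a b → Θ × Icc a b} (hf : ForcedIncreasing α f) :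
    ∃ F : Θ × ℝ ≃ₜ Θ × ℝ, (∀ p, (F p).1 = α p.1) ∧ (∀ θ, StrictMono fun x => (F (θ, x)).2) ∧
      ∀ p : Θ × Icc a b, F (p.1, p.2) = ((f p).1, ↑(f p).2) := by
  obtain ⟨hfc, hfα, hfmono⟩ := hf
  let r (x : ℝ) : Icc a b := projIcc a b hab x
  let φ (p : Θ × ℝ) : ℝ := (f (p.1, r p.2)).2 + (p.2 - r p.2)
  have hr : Continuous r := continuous_projIcc
  have hφ : Continuous φ := by fun_prop
  have hmono (θ : Θ) : StrictMono fun x => φ (θ, x) := fun x y hxy => by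
    rcases (monotone_projIcc hab hxy.le).eq_or_lt with h | h
    · change _ + (x - r x) < _ + (y - r y)
      rw [show r x = r y from h]
      gcongr
    · refine add_lt_add_of_lt_of_le (hfmono θ h) ?_
      have hlip : (r y - r x : ℝ) ≤ y - x := calc
        (r y - r x : ℝ) ≤ dist (r y) (r x) := le_abs_self _
        _ ≤ dist y x := (LipschitzWith.projIcc hab).dist_le_mul_of_le le_rfl |>.trans (one_mul _).le
        _ = y - x := abs_of_pos (sub_pos.2 hxy)
      linarith
  have hsurj (θ : Θ) : Surjective fun x => φ (θ, x) := by
    refine Continuous.surjective (by fun_prop) ?_ ?_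
    · refine tendsto_atTop_mono (fun x => ?_) (tendsto_atTop_add_const_right _ (a - b) tendsto_id)
      have := (f (θ, r x)).2.2.1
      have := (r x).2.2
      simp only [φ, id]
      linarith
    · refine tendsto_atBot_mono (fun x => ?_) (tendsto_atBot_add_const_right _ (b - a) tendsto_id)
      have := (f (θ, r x)).2.2.2
      have := (r x).2.1
      simp only [φ, id]
      linarith
  obtain ⟨F, hF⟩ := exists_homeomorph_fiberwise α hφ hmono hsurj
  refine ⟨F, fun p => congrArg Prod.fst (hF p), fun θ => by simpa only [hF] using hmono θ,
    fun p => (hF _).trans (Prod.ext (hfα p).symm ?_)⟩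
  simp only [φ, r, projIcc_val, sub_self, add_zero]

/-- Functions `jump k` on `Θ × [a, b]`, one for each point of an orbit `base` of `α`, used as the
additional coordinates of the blow-up: `jump k` increases along fibres, its only discontinuity is
at the point of the curve `γ` over `base k`, where it jumps from `0` to `1` along the fibre, and
`jump 0` has no limit there along `γ`. The map `f` carries `jump k` to `jump (k + 1)`. -/
structure JumpFamily {Θ : Type*} [TopologicalSpace Θ] {a b : ℝ} (α : Θ ≃ₜ Θ)
    (f : Θ × Icc a b → Θ × Icc a b) (γ : Θ → Icc a b) where
  base : ℤ → Θ
  base_injective : Injective base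
  base_succ : ∀ k, base (k + 1) = α (base k)
  jump : ℤ → Θ × Icc a b → unitInterval
  jump_continuousOn : ∀ k, ContinuousOn (jump k) {(base k, γ (base k))}ᶜ
  jump_monotone : ∀ k θ, Monotone fun x => jump k (θ, x)
  jump_of_lt : ∀ k, ∀ x < γ (base k), jump k (base k, x) = 0
  jump_of_gt : ∀ k, ∀ x > γ (base k), jump k (base k, x) = 1
  jump_succ_map : ∀ k p, jump (k + 1) (f p) = jump k p
  not_tendsto_jump_zero : ∀ l, ¬ Tendsto (fun θ => jump 0 (θ, γ θ)) (𝓝[≠] (base 0)) (𝓝 l)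

section SkewProductPowers

variable {Θ L : Type*} [TopologicalSpace Θ] [TopologicalSpace L] {α : Θ ≃ₜ Θ}
  {F : Θ × L ≃ₜ Θ × L}

lemma zpow_apply_curve {γ : Θ → L} (hF : ∀ θ, F (θ, γ θ) = (α θ, γ (α θ))) (n : ℤ) (θ : Θ) :
    (F ^ n) (θ, γ θ) = ((α ^ n) θ, γ ((α ^ n) θ)) := by
  refine (zpow_rel_iff (r := fun p θ => p = (θ, γ θ)) (fun p θ => ?_) n _ _).2 rfl
  rw [← hF, F.injective.eq_iff]

lemma zpow_fiber_lt [LinearOrder L] (hFα : ∀ p, (F p).1 = α p.1)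
    (hFmono : ∀ θ, StrictMono fun x => (F (θ, x)).2) (n : ℤ) {θ : Θ} {x y : L} (hxy : x < y) :
    ((F ^ n) (θ, x)).1 = ((F ^ n) (θ, y)).1 ∧ ((F ^ n) (θ, x)).2 < ((F ^ n) (θ, y)).2 := by
  refine (zpow_rel_iff (r := fun p q : Θ × L => p.1 = q.1 ∧ p.2 < q.2) ?_ n _ _).2 ⟨rfl, hxy⟩
  rintro ⟨θ, x⟩ ⟨θ', y⟩
  rw [hFα, hFα, α.injective.eq_iff]
  refine and_congr_right ?_
  rintro rfl
  exact (hFmono θ).lt_iff_lt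

end SkewProductPowers

lemma ForcedIncreasing.nonempty_jumpFamily {Θ : Type*} [MetricSpace Θ] {a b : ℝ} {α : Θ ≃ₜ Θ}
    {f : Θ × Icc a b → Θ × Icc a b} (hf : ForcedIncreasing α f) {γ : Θ → Icc a b}
    (hγ : Continuous γ) (hγf : ∀ θ, f (θ, γ θ) = (α θ, γ (α θ))) (θ₀ : Θ) [(𝓝[≠] θ₀).NeBot]
    (hθ₀ : Injective fun n : ℤ => (α ^ n) θ₀) : Nonempty (JumpFamily α f γ) := by
  obtain ⟨F, hFα, hFmono, hFf⟩ := hf.exists_homeomorph_extension ((γ θ₀).2.1.trans (γ θ₀).2.2)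
  obtain ⟨τ, hτc, hτmono, hτ0, hτ1, hτlim⟩ :=
    exists_monotone_jump θ₀ (γ := fun θ => (γ θ : ℝ)) (by fun_prop)
  have hFγ (θ : Θ) : F (θ, γ θ) = (α θ, ↑(γ (α θ))) := (hFf (θ, γ θ)).trans (by rw [hγf])
  have hback (k : ℤ) : (F ^ (-k)) ((α ^ k) θ₀, γ ((α ^ k) θ₀)) = (θ₀, ↑(γ θ₀)) := by
    rw [← zpow_apply_curve (γ := fun θ => (γ θ : ℝ)) hFγ, ← Homeomorph.mul_apply,
      ← zpow_add, neg_add_cancel]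
    rfl
  have hτfst {k : ℤ} {p : Θ × ℝ} (h : ((F ^ (-k)) p).1 = θ₀) :
      τ ((F ^ (-k)) p) = τ (θ₀, ((F ^ (-k)) p).2) := congrArg τ (Prod.ext h rfl)
  refine ⟨{
    base k := (α ^ k) θ₀
    base_injective := hθ₀
    base_succ k := by rw [add_comm, zpow_one_add, Homeomorph.mul_apply]
    jump k p := τ ((F ^ (-k)) (p.1, p.2))
    jump_continuousOn k := hτc.comp (by fun_prop) fun p hp hp' => hp ?_
    jump_monotone k θ := monotone_iff_forall_lt.2 fun x y hxy => ?_
    jump_of_lt k x hx := ?_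
    jump_of_gt k x hx := ?_
    jump_succ_map k p := ?_
    not_tendsto_jump_zero := hτlim }⟩
  · have hp := Prod.ext_iff.1 ((F ^ (-k)).injective (hp'.trans (hback k).symm))
    exact Prod.ext hp.1 (Subtype.ext hp.2)
  · obtain ⟨h1, h2⟩ := zpow_fiber_lt hFα hFmono (-k) hxy
    calc τ ((F ^ (-k)) (θ, x)) = τ (((F ^ (-k)) (θ, y)).1, ((F ^ (-k)) (θ, x)).2) :=
          congrArg τ (Prod.ext h1 rfl)
      _ ≤ τ ((F ^ (-k)) (θ, y)) := hτmono _ h2.le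
  · obtain ⟨h1, h2⟩ := zpow_fiber_lt hFα hFmono (-k) hx
    rw [hback] at h1 h2
    rw [hτfst h1, hτ0 _ h2]
  · obtain ⟨h1, h2⟩ := zpow_fiber_lt hFα hFmono (-k) hx
    rw [hback] at h1 h2
    rw [hτfst h1.symm, hτ1 _ h2]
  · rw [← hFf, ← Homeomorph.mul_apply, ← zpow_add_one, neg_add_rev, neg_add_cancel_comm]

section FiberOrderHomeo

lemma isClosed_setOf_fst_eq_or_snd_eq {X C : Type*} [TopologicalSpace X] [TopologicalSpace C]
    [T1Space X] [T2Space C] {c : X} {g : X → C} (hg : ContinuousOn g {c}ᶜ) :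
    IsClosed {q : X × C | q.1 = c ∨ q.2 = g q.1} := by
  have hU : IsOpen {q : X × C | q.1 ≠ c} := isOpen_compl_singleton.preimage continuous_fst
  have hgU : ContinuousOn (fun q : X × C => (q.2, g q.1)) {q | q.1 ≠ c} :=
    continuousOn_snd.prodMk (hg.comp continuousOn_fst fun _ hq => hq)
  convert (hgU.isOpen_inter_preimage hU isClosed_diagonal.isOpen_compl).isClosed_compl using 1
  ext q
  simp [or_iff_not_imp_left]

lemma isConnected_of_isConnected_sections {X C : Type*} [TopologicalSpace X]
    [TopologicalSpace C] [ConnectedSpace X] [T2Space X] {K : Set (X × C)} (hK : IsCompact K)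
    (hconn : ∀ x, IsConnected (Prod.mk x ⁻¹' K)) : IsConnected K := by
  have : CompactSpace K := isCompact_iff_compactSpace.1 hK
  let π (z : K) : X := z.1.1
  have hπ : Continuous π := by fun_prop
  have hfib (x : X) : IsConnected (π ⁻¹' {x}) := by
    have hrange : range (fun c : Prod.mk x ⁻¹' K => (⟨(x, c), c.2⟩ : K)) = π ⁻¹' {x} := by
      ext ⟨⟨y, c⟩, h⟩
      constructor
      · rintro ⟨c', hc'⟩
        exact (congrArg π hc').symm
      · rintro rfl
        exact ⟨⟨c, h⟩, rfl⟩
    have := isConnected_iff_connectedSpace.1 (hconn x)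
    exact hrange ▸ isConnected_range (by fun_prop)
  have hquot : IsCoinducing π :=
    (hπ.isClosedMap.isQuotientMap hπ fun x => (hfib x).nonempty).isCoinducing
  rw [isConnected_iff_connectedSpace, connectedSpace_iff_univ, ← preimage_univ (f := π)]
  exact hquot.isConnected_preimage_of_isClosed hfib isClosed_univ isConnected_univ

lemma exists_continuous_strictMono_pi (ι : Type*) [Countable ι] :
    ∃ e : (ι → unitInterval) → ℝ, Continuous e ∧ StrictMono e := by
  have := Encodable.ofCountable ι
  let w (i : ι) : ℝ := (1 / 2) ^ Encodable.encode i
  have hw (i : ι) : 0 < w i := by positivity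
  have hbound (i : ι) (t : ι → unitInterval) : ‖w i * t i‖ ≤ w i := by
    rw [Real.norm_of_nonneg (mul_nonneg (hw i).le (t i).2.1)]
    exact mul_le_of_le_one_right (hw i).le (t i).2.2
  have hsum (t : ι → unitInterval) : Summable fun i => w i * (t i : ℝ) :=
    summable_geometric_two_encode.of_norm_bounded fun i => hbound i t
  refine ⟨fun t => ∑' i, w i * t i,
    continuous_tsum (by fun_prop) summable_geometric_two_encode hbound, fun s t hst => ?_⟩
  obtain ⟨hle, i, hlt⟩ := Pi.lt_def.1 hst
  exact (hsum s).tsum_lt_tsum (i := i) (fun j => mul_le_mul_of_nonneg_left (hle j) (hw j).le)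
    (mul_lt_mul_of_pos_left hlt (hw i)) (hsum t)

lemma le_iff_le_of_isChain {Y : Type*} [PartialOrder Y] {K : Set Y} (hK : IsChain (· ≤ ·) K)
    {e : Y → ℝ} (he : StrictMono e) {y z : Y} (hy : y ∈ K) (hz : z ∈ K) : e y ≤ e z ↔ y ≤ z := by
  refine ⟨fun h => ?_, fun h => he.monotone h⟩
  rcases hK.total hy hz with hyz | hzy
  · exact hyz
  · exact (hzy.eq_of_not_lt fun hlt => h.not_gt (he hlt)).ge

variable {Θ Y : Type*} [TopologicalSpace Θ] [TopologicalSpace Y]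

/-- A homeomorphism of `Z ⊆ Θ × Y` with `Θ × L` over `Θ` which is an order isomorphism on every
fibre. -/
structure FiberOrderHomeo (L : Type*) [TopologicalSpace L] [LE Y] [LE L] (Z : Set (Θ × Y)) where
  toHomeomorph : Z ≃ₜ Θ × L
  fst_apply : ∀ z, (toHomeomorph z).1 = z.1.1
  snd_le_iff : ∀ z w, z.1.1 = w.1.1 →
    ((toHomeomorph z).2 ≤ (toHomeomorph w).2 ↔ z.1.2 ≤ w.1.2)

lemma exists_strictMono_eq_eq [Preorder Y] {e : Y → ℝ} (he : Continuous e) (hmono : StrictMono e)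
    {lo hi : Θ → Y} (hlo : Continuous lo) (hhi : Continuous hi) (hlt : ∀ θ, lo θ < hi θ) {a b : ℝ}
    (hab : a < b) : ∃ φ : Θ → Y → ℝ, Continuous ↿φ ∧
      ∀ θ, StrictMono (φ θ) ∧ φ θ (lo θ) = a ∧ φ θ (hi θ) = b := by
  have hgap (θ : Θ) : 0 < e (hi θ) - e (lo θ) := sub_pos.2 (hmono (hlt θ))
  refine ⟨fun θ y => a + (b - a) * ((e y - e (lo θ)) / (e (hi θ) - e (lo θ))), ?_,
    fun θ => ⟨fun y z hyz => ?_, by simp, by simp [div_self (hgap θ).ne']⟩⟩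
  · have (p : Θ × Y) : e (hi p.1) - e (lo p.1) ≠ 0 := (hgap p.1).ne'
    fun_prop (disch := assumption)
  · have := sub_pos.2 hab
    have := hgap θ
    have := hmono hyz
    beta_reduce
    gcongr

lemma nonempty_fiberOrderHomeo [T2Space Θ] [PartialOrder Y] {Z : Set (Θ × Y)} (hZ : IsCompact Z)
    (hchain : ∀ θ, IsChain (· ≤ ·) (Prod.mk θ ⁻¹' Z))
    (hconn : ∀ θ, IsPreconnected (Prod.mk θ ⁻¹' Z)) {lo hi : Θ → Y}
    (hlo : ∀ θ, IsLeast (Prod.mk θ ⁻¹' Z) (lo θ)) (hhi : ∀ θ, IsGreatest (Prod.mk θ ⁻¹' Z) (hi θ))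
    {φ : Θ → Y → ℝ} (hφ : Continuous ↿φ) (hφmono : ∀ θ, StrictMono (φ θ)) {a b : ℝ}
    (hφlo : ∀ θ, φ θ (lo θ) = a) (hφhi : ∀ θ, φ θ (hi θ) = b) :
    Nonempty (FiberOrderHomeo (Icc a b) Z) := by
  have : CompactSpace Z := isCompact_iff_compactSpace.1 hZ
  have hmem (z : Z) : φ z.1.1 z.1.2 ∈ Icc a b := by
    rw [← hφlo z.1.1, ← hφhi z.1.1]
    exact ⟨(hφmono _).monotone ((hlo _).2 z.2), (hφmono _).monotone ((hhi _).2 z.2)⟩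
  have hle (z w : Z) (h : z.1.1 = w.1.1) : φ z.1.1 z.1.2 ≤ φ w.1.1 w.1.2 ↔ z.1.2 ≤ w.1.2 := by
    rw [h]
    exact le_iff_le_of_isChain (hchain w.1.1) (hφmono _) (h ▸ z.2 : _) w.2
  let E (z : Z) : Θ × Icc a b := (z.1.1, ⟨φ z.1.1 z.1.2, hmem z⟩)
  have hE : IsHomeomorph E := by
    refine isHomeomorph_iff_continuous_bijective.2 ⟨?_, fun z w h => ?_, fun ⟨θ, v, hv⟩ => ?_⟩
    · exact .prodMk (by fun_prop) (.subtype_mk (hφ.comp continuous_subtype_val) _)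
    · obtain ⟨h1, h2⟩ := Prod.ext_iff.1 h
      have h2 := Subtype.ext_iff.1 h2
      exact Subtype.ext
        (Prod.ext h1 (((hle z w h1).1 h2.le).antisymm ((hle w z h1.symm).1 h2.ge)))
    · rw [← hφlo θ, ← hφhi θ] at hv
      obtain ⟨y, hy, rfl⟩ :=
        (hconn θ).intermediate_value (hlo θ).1 (hhi θ).1 (f := φ θ) (by fun_prop) hv
      exact ⟨⟨(θ, y), hy⟩, rfl⟩
  exact ⟨⟨hE.homeomorph, fun _ => rfl, hle⟩⟩

end FiberOrderHomeo

namespace JumpFamily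

variable {Θ : Type*} [TopologicalSpace Θ] {a b : ℝ} {α : Θ ≃ₜ Θ} {f : Θ × Icc a b → Θ × Icc a b}
  {γ : Θ → Icc a b} (S : JumpFamily α f γ)

/-- The point of the curve over `base k`; it is blown up to a segment. -/
def singularPt (k : ℤ) : Θ × Icc a b := (S.base k, γ (S.base k))

/-- The closed relation in `Θ × [a, b] × [0, 1]^ℤ` obtained from the graph of `(jump k)ₖ` by leaving
the `k`-th coordinate free over `singularPt k`. -/
def blowUp : Set (Θ × Icc a b × (ℤ → unitInterval)) :=
  {z | ∀ k, (z.1, z.2.1) = S.singularPt k ∨ z.2.2 k = S.jump k (z.1, z.2.1)}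

/-- The fibre coordinates of the point of the graph of `(jump k)ₖ` over `p`. -/
def lift (p : Θ × Icc a b) : Icc a b × (ℤ → unitInterval) := (p.2, fun k => S.jump k p)

variable {S}

lemma singularPt_injective : Injective S.singularPt :=
  fun _ _ h => S.base_injective (congrArg Prod.fst h)

lemma lift_mem_blowUp (p : Θ × Icc a b) : (p.1, S.lift p) ∈ S.blowUp := fun _ => .inr rfl

lemma mem_blowUp_iff {θ : Θ} {x : Icc a b} {t : ℤ → unitInterval} :
    (θ, x, t) ∈ S.blowUp ↔ ∀ k, (θ, x) = S.singularPt k ∨ t k = S.jump k (θ, x) := Iff.rfl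

lemma mem_blowUp_iff_of_notMem_range {θ : Θ} {x : Icc a b} (hp : (θ, x) ∉ range S.singularPt)
    {t : ℤ → unitInterval} : (θ, x, t) ∈ S.blowUp ↔ t = fun k => S.jump k (θ, x) := by
  rw [funext_iff]
  exact forall_congr' fun k => or_iff_right fun h => hp ⟨k, h.symm⟩

lemma mem_blowUp_singularPt_iff {k : ℤ} {t : ℤ → unitInterval} :
    (S.base k, γ (S.base k), t) ∈ S.blowUp ↔
      ∃ u, t = update (fun j => S.jump j (S.singularPt k)) k u := by
  constructor
  · refine fun ht => ⟨t k, (eq_update_iff.2 ⟨rfl, fun j hj => ?_⟩)⟩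
    exact (ht j).resolve_left fun h => hj (singularPt_injective h).symm
  · rintro ⟨u, rfl⟩
    refine mem_blowUp_iff.2 fun j => ?_
    rcases eq_or_ne j k with rfl | hj
    · exact .inl rfl
    · exact .inr (update_of_ne hj _ _)

lemma isClosed_blowUp [T1Space Θ] : IsClosed S.blowUp := by
  simp only [blowUp, ofPred_forall]
  exact isClosed_iInter fun k => (isClosed_setOf_fst_eq_or_snd_eq (S.jump_continuousOn k)).preimage
    (f := fun z : Θ × Icc a b × (ℤ → unitInterval) => ((z.1, z.2.1), z.2.2 k)) (by fun_prop)

lemma le_of_lt_of_mem_blowUp {θ : Θ} {x y : Icc a b} {s t : ℤ → unitInterval}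
    (hs : (θ, x, s) ∈ S.blowUp) (ht : (θ, y, t) ∈ S.blowUp) (hxy : x < y) : s ≤ t := by
  intro k
  rcases mem_blowUp_iff.1 hs k with hx | hx <;> rcases mem_blowUp_iff.1 ht k with hy | hy
  · exact absurd (congrArg Prod.snd (hx.trans hy.symm)) hxy.ne
  · obtain ⟨rfl, rfl⟩ := Prod.ext_iff.1 hx
    exact (S.jump_of_gt k y hxy ▸ hy) ▸ unitInterval.le_one'
  · obtain ⟨rfl, rfl⟩ := Prod.ext_iff.1 hy
    exact (S.jump_of_lt k x hxy ▸ hx) ▸ unitInterval.nonneg'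
  · rw [hx, hy]
    exact S.jump_monotone k θ hxy.le

lemma isChain_fiber_blowUp (θ : Θ) : IsChain (· ≤ ·) (Prod.mk θ ⁻¹' S.blowUp) := by
  rintro ⟨x, s⟩ hs ⟨y, t⟩ ht -
  rcases lt_trichotomy x y with hxy | rfl | hxy
  · exact .inl ⟨hxy.le, le_of_lt_of_mem_blowUp hs ht hxy⟩
  · by_cases hp : (θ, x) ∈ range S.singularPt
    · obtain ⟨k, hk⟩ := hp
      obtain ⟨rfl, rfl⟩ := Prod.ext_iff.1 hk
      obtain ⟨u, rfl⟩ := mem_blowUp_singularPt_iff.1 hs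
      obtain ⟨v, rfl⟩ := mem_blowUp_singularPt_iff.1 ht
      simpa only [Prod.mk_le_mk, le_refl, true_and, update_le_update_iff'] using le_total u v
    · rw [(mem_blowUp_iff_of_notMem_range hp).1 hs, (mem_blowUp_iff_of_notMem_range hp).1 ht]
      exact .inl le_rfl
  · exact .inr ⟨hxy.le, le_of_lt_of_mem_blowUp ht hs hxy⟩

lemma isConnected_fiber_blowUp [T1Space Θ] (hab : a ≤ b) (θ : Θ) :
    IsConnected (Prod.mk θ ⁻¹' S.blowUp) := by
  have : ConnectedSpace (Icc a b) := Subtype.connectedSpace (isConnected_Icc hab)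
  refine isConnected_of_isConnected_sections
    (isClosed_blowUp.preimage (Continuous.prodMk_right θ)).isCompact fun x =>
    ⟨⟨_, lift_mem_blowUp (θ, x)⟩, ?_⟩
  have : Prod.mk x ⁻¹' (Prod.mk θ ⁻¹' S.blowUp) =
      pi univ fun k => {u | (θ, x) = S.singularPt k ∨ u = S.jump k (θ, x)} := by
    ext t
    simp [blowUp]
  rw [this]
  refine isPreconnected_univ_pi fun k => ?_
  by_cases h : (θ, x) = S.singularPt k
  · simpa only [h, true_or, ofPred_true] using isPreconnected_univ
  · simpa only [h, false_or, ofPred_eq_eq_singleton] using isPreconnected_singleton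

lemma notMem_range_singularPt {p : Θ × Icc a b} (hp : p ∉ curveGraph γ) :
    p ∉ range S.singularPt := by
  rintro ⟨k, rfl⟩
  exact hp rfl

lemma continuous_lift_of_ne {x : Icc a b} (hx : ∀ θ, x ≠ γ θ) :
    Continuous fun θ => S.lift (θ, x) := by
  refine continuous_const.prodMk (continuous_pi fun k => ?_)
  refine (S.jump_continuousOn k).comp_continuous (by fun_prop) fun θ h => ?_
  obtain ⟨rfl, h⟩ := Prod.ext_iff.1 h
  exact hx _ h

lemma isLeast_lift {θ : Θ} {x : Icc a b} (hx : IsBot x) (hxγ : x ≠ γ θ) :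
    IsLeast (Prod.mk θ ⁻¹' S.blowUp) (S.lift (θ, x)) := by
  refine ⟨lift_mem_blowUp (θ, x), fun ⟨y, t⟩ ht => ⟨hx y, ?_⟩⟩
  rcases (hx y).eq_or_lt with rfl | hxy
  · exact ((mem_blowUp_iff_of_notMem_range (notMem_range_singularPt hxγ)).1 ht).ge
  · exact le_of_lt_of_mem_blowUp (lift_mem_blowUp (θ, x)) ht hxy

lemma isGreatest_lift {θ : Θ} {x : Icc a b} (hx : IsTop x) (hxγ : x ≠ γ θ) :
    IsGreatest (Prod.mk θ ⁻¹' S.blowUp) (S.lift (θ, x)) := by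
  refine ⟨lift_mem_blowUp (θ, x), fun ⟨y, t⟩ ht => ⟨hx y, ?_⟩⟩
  rcases (hx y).eq_or_lt with rfl | hxy
  · exact ((mem_blowUp_iff_of_notMem_range (notMem_range_singularPt hxγ)).1 ht).le
  · exact le_of_lt_of_mem_blowUp ht (lift_mem_blowUp (θ, x)) hxy

lemma nonempty_fiberOrderHomeo_blowUp [CompactSpace Θ] [T2Space Θ] (hab : a < b)
    (hγ : ∀ θ, (γ θ : ℝ) ∈ Ioo a b) : Nonempty (FiberOrderHomeo (Icc a b) S.blowUp) := by
  let x₀ : Icc a b := ⟨a, left_mem_Icc.2 hab.le⟩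
  let x₁ : Icc a b := ⟨b, right_mem_Icc.2 hab.le⟩
  have hbot : IsBot x₀ := fun x => x.2.1
  have htop : IsTop x₁ := fun x => x.2.2
  have hne₀ (θ : Θ) : x₀ ≠ γ θ := fun h => (hγ θ).1.ne (congrArg Subtype.val h)
  have hne₁ (θ : Θ) : x₁ ≠ γ θ := fun h => (hγ θ).2.ne' (congrArg Subtype.val h)
  obtain ⟨e, he, hemono⟩ := exists_continuous_strictMono_pi ℤ
  have hsum : StrictMono fun y : Icc a b × (ℤ → unitInterval) => (y.1 : ℝ) + e y.2 := by
    intro y z h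
    rcases Prod.lt_iff.1 h with ⟨h1, h2⟩ | ⟨h1, h2⟩
    · exact add_lt_add_of_lt_of_le h1 (hemono.monotone h2)
    · exact add_lt_add_of_le_of_lt h1 (hemono h2)
  obtain ⟨φ, hφ, hφprop⟩ := exists_strictMono_eq_eq (by fun_prop) hsum
    (continuous_lift_of_ne (S := S) hne₀) (continuous_lift_of_ne hne₁)
    (fun θ => Prod.lt_iff.2 (.inl ⟨hab, fun k => S.jump_monotone k θ (hbot x₁)⟩)) hab
  exact nonempty_fiberOrderHomeo isClosed_blowUp.isCompact isChain_fiber_blowUp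
      (fun θ => (isConnected_fiber_blowUp hab.le θ).isPreconnected)
      (fun θ => isLeast_lift hbot (hne₀ θ)) (fun θ => isGreatest_lift htop (hne₁ θ)) hφ
      (fun θ => (hφprop θ).1) (fun θ => (hφprop θ).2.1) (fun θ => (hφprop θ).2.2)

end JumpFamily

namespace FiberOrderHomeo

variable {Θ Y L : Type*} [TopologicalSpace Θ] [TopologicalSpace Y] [TopologicalSpace L]
  [LE Y] [LE L] {Z : Set (Θ × Y)} (E : FiberOrderHomeo L Z)

lemma fst_symm_apply (p : Θ × L) : (E.toHomeomorph.symm p).1.1 = p.1 := by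
  rw [← E.fst_apply, Homeomorph.apply_symm_apply]

lemma symm_le_symm_iff (p q : Θ × L) (h : p.1 = q.1) :
    (E.toHomeomorph.symm p).1.2 ≤ (E.toHomeomorph.symm q).1.2 ↔ p.2 ≤ q.2 := by
  rw [← E.snd_le_iff _ _ (by simpa only [fst_symm_apply]), Homeomorph.apply_symm_apply,
    Homeomorph.apply_symm_apply]

end FiberOrderHomeo

namespace JumpFamily

section Shift

variable {Θ : Type*} [TopologicalSpace Θ] {a b : ℝ} {α : Θ ≃ₜ Θ} {f : Θ × Icc a b → Θ × Icc a b}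
  {γ : Θ → Icc a b} {S : JumpFamily α f γ} (hγf : ∀ θ, f (θ, γ θ) = (α θ, γ (α θ)))

lemma map_singularPt (hγf : ∀ θ, f (θ, γ θ) = (α θ, γ (α θ))) (k : ℤ) :
    f (S.singularPt k) = S.singularPt (k + 1) := by
  rw [singularPt, hγf, ← S.base_succ, singularPt]

/-- The lift of `f` to the blow-up: `f` on `Θ × [a, b]` and the shift on `[0, 1]^ℤ`. -/
def shift (hγf : ∀ θ, f (θ, γ θ) = (α θ, γ (α θ))) (z : S.blowUp) : S.blowUp :=
  ⟨((f (z.1.1, z.1.2.1)).1, (f (z.1.1, z.1.2.1)).2, fun k => z.1.2.2 (k - 1)), fun k => by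
    obtain ⟨k, rfl⟩ : ∃ j, k = j + 1 := ⟨k - 1, by ring⟩
    simp only [add_sub_cancel_right, Prod.mk.eta, S.jump_succ_map, ← map_singularPt hγf]
    exact (z.2 k).imp_left (congrArg f)⟩

lemma continuous_shift (hf : Continuous f) : Continuous (S.shift hγf) := by
  unfold shift
  fun_prop

lemma shift_le_shift_iff (hf : ForcedIncreasing α f) {z w : S.blowUp} (h : z.1.1 = w.1.1) :
    (S.shift hγf z).1.2 ≤ (S.shift hγf w).1.2 ↔ z.1.2 ≤ w.1.2 := by
  have h1 : (f (z.1.1, z.1.2.1)).2 ≤ (f (w.1.1, w.1.2.1)).2 ↔ z.1.2.1 ≤ w.1.2.1 := by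
    rw [h]
    exact (hf.2.2 w.1.1).le_iff_le
  have h2 : (∀ k, z.1.2.2 (k - 1) ≤ w.1.2.2 (k - 1)) ↔ ∀ k, z.1.2.2 k ≤ w.1.2.2 k :=
    (Equiv.subRight 1).forall_congr fun _ => Iff.rfl
  exact and_congr h1 h2

lemma exists_shift_eq (w : S.blowUp) (hw : w.1.2.1 = γ w.1.1) :
    ∃ z : S.blowUp, z.1.2.1 = γ z.1.1 ∧ S.shift hγf z = w := by
  obtain ⟨⟨θ, x, t⟩, ht⟩ := w
  obtain rfl : x = γ θ := hw
  obtain ⟨θ, rfl⟩ := α.surjective θ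
  refine ⟨⟨(θ, γ θ, fun k => t (k + 1)), fun k => ?_⟩, rfl, ?_⟩
  · rw [← S.jump_succ_map, hγf]
    refine (mem_blowUp_iff.1 ht (k + 1)).imp_left fun h => ?_
    have := α.injective ((congrArg Prod.fst h).trans (S.base_succ k))
    subst this
    rfl
  · simp [shift, hγf]

end Shift

section Collapse

variable {Θ : Type*} [TopologicalSpace Θ] {a b : ℝ} {α : Θ ≃ₜ Θ} {f : Θ × Icc a b → Θ × Icc a b}
  {γ : Θ → Icc a b} {S : JumpFamily α f γ} (E : FiberOrderHomeo (Icc a b) S.blowUp)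

/-- The projection of the blow-up, identified with `Θ × [a, b]`, to the original space: the factor
map `h`. -/
def collapse (p : Θ × Icc a b) : Θ × Icc a b := (p.1, (E.toHomeomorph.symm p).1.2.1)

lemma collapse_toHomeomorph (z : S.blowUp) :
    collapse E (E.toHomeomorph z) = (z.1.1, z.1.2.1) := by
  rw [collapse, E.fst_apply, Homeomorph.symm_apply_apply]

lemma continuous_collapse : Continuous (collapse E) := by
  unfold collapse
  fun_prop

lemma surjective_collapse : Surjective (collapse E) := fun p =>
  ⟨E.toHomeomorph ⟨(p.1, S.lift p), lift_mem_blowUp p⟩, collapse_toHomeomorph E _⟩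

lemma monotone_collapse (θ : Θ) : Monotone fun x => (collapse E (θ, x)).2 := fun x y hxy =>
  ((E.symm_le_symm_iff (θ, x) (θ, y) rfl).2 hxy).1

lemma preimage_collapse_of_notMem_range {p : Θ × Icc a b} (hp : p ∉ range S.singularPt) :
    ∃ x, collapse E ⁻¹' {p} = {(p.1, x)} := by
  let z : S.blowUp := ⟨(p.1, S.lift p), lift_mem_blowUp p⟩
  refine ⟨(E.toHomeomorph z).2, ?_⟩
  have hz : (p.1, (E.toHomeomorph z).2) = E.toHomeomorph z := Prod.ext (E.fst_apply z).symm rfl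
  rw [hz]
  refine eq_singleton_iff_unique_mem.2 ⟨collapse_toHomeomorph E z, fun q hq => ?_⟩
  obtain ⟨⟨⟨θ, x, t⟩, ht⟩, rfl⟩ := E.toHomeomorph.surjective q
  obtain rfl : (θ, x) = p := (collapse_toHomeomorph E _).symm.trans hq
  obtain rfl : t = _ := (mem_blowUp_iff_of_notMem_range hp).1 ht
  rfl

lemma injOn_collapse : InjOn (collapse E) (collapse E ⁻¹' curveGraph γ)ᶜ := fun p hp q _ hpq => by
  obtain ⟨x, hx⟩ := preimage_collapse_of_notMem_range E (notMem_range_singularPt hp)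
  exact (subsingleton_singleton.anti hx.le) rfl hpq.symm

lemma preimage_collapse_singularPt (k : ℤ) :
    ∃ x₁ x₂, x₁ < x₂ ∧
      collapse E ⁻¹' {S.singularPt k} = {(S.singularPt k).1} ×ˢ Icc x₁ x₂ := by
  let z (u : unitInterval) : S.blowUp :=
    ⟨(S.base k, γ (S.base k), _), mem_blowUp_singularPt_iff.2 ⟨u, rfl⟩⟩
  have hz (w : S.blowUp) : (w.1.1, w.1.2.1) = S.singularPt k ↔
      w.1.1 = S.base k ∧ (z 0).1.2 ≤ w.1.2 ∧ w.1.2 ≤ (z 1).1.2 := by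
    obtain ⟨⟨θ, x, t⟩, ht⟩ := w
    constructor
    · intro h
      obtain ⟨rfl, rfl⟩ := Prod.ext_iff.1 h
      obtain ⟨u, rfl⟩ := mem_blowUp_singularPt_iff.1 ht
      exact ⟨rfl, ⟨le_rfl, update_mono unitInterval.nonneg'⟩,
        ⟨le_rfl, update_mono unitInterval.le_one'⟩⟩
    · rintro ⟨rfl, h0, h1⟩
      exact Prod.ext rfl (h1.1.antisymm h0.1)
  refine ⟨(E.toHomeomorph (z 0)).2, (E.toHomeomorph (z 1)).2, ?_, ?_⟩
  · rw [lt_iff_le_not_ge, E.snd_le_iff (z 0) (z 1) rfl, E.snd_le_iff (z 1) (z 0) rfl,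
      ← lt_iff_le_not_ge]
    exact Prod.mk_lt_mk_iff_right.2 (update_lt_update_iff.2 zero_lt_one)
  · ext p
    obtain ⟨w, rfl⟩ := E.toHomeomorph.surjective p
    rw [mem_preimage, collapse_toHomeomorph, mem_singleton_iff, hz, mem_prod, E.fst_apply,
      mem_singleton_iff]
    refine and_congr_right fun h => ?_
    rw [mem_Icc, E.snd_le_iff _ _ h.symm, E.snd_le_iff _ _ h]

lemma not_curveGraph_subset {η : Θ → Icc a b} (hη : Continuous η) :
    ¬ curveGraph η ⊆ collapse E ⁻¹' curveGraph γ := by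
  intro hsub
  let t₀ (θ : Θ) : unitInterval := (E.toHomeomorph.symm (θ, η θ)).1.2.2 0
  have ht₀ : Continuous t₀ := by fun_prop
  have heq : ∀ θ ≠ S.base 0, t₀ θ = S.jump 0 (θ, γ θ) := fun θ hθ => by
    have hfst := E.fst_symm_apply (θ, η θ)
    have hsnd : (E.toHomeomorph.symm (θ, η θ)).1.2.1 = γ θ := hsub (a := (θ, η θ)) rfl
    simpa only [hfst, hsnd] using ((E.toHomeomorph.symm (θ, η θ)).2 0).resolve_left
      fun h => hθ (hfst.symm.trans (congrArg Prod.fst h))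
  exact S.not_tendsto_jump_zero _ ((ht₀.continuousAt.tendsto.mono_left nhdsWithin_le_nhds).congr'
    (eventually_nhdsWithin_of_forall heq))

lemma existsUnique_collapse_mem_curveGraph {θ : Θ} (hθ : θ ∉ range S.base) :
    ∃! x, (θ, x) ∈ collapse E ⁻¹' curveGraph γ := by
  obtain ⟨x, hx⟩ := preimage_collapse_of_notMem_range E (p := (θ, γ θ)) (by
    rintro ⟨k, hk⟩
    exact hθ ⟨k, congrArg Prod.fst hk⟩)
  have (y : Icc a b) : (θ, y) ∈ collapse E ⁻¹' curveGraph γ ↔ y = x := calc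
    _ ↔ (θ, y) ∈ collapse E ⁻¹' {(θ, γ θ)} := by simp [curveGraph, collapse]
    _ ↔ y = x := by simp [hx]
  simp only [this, existsUnique_eq]

/-- The lift of `f` to the blow-up, identified with `Θ × [a, b]`: the extension `f̂`. -/
def extension (hγf : ∀ θ, f (θ, γ θ) = (α θ, γ (α θ))) (p : Θ × Icc a b) : Θ × Icc a b :=
  E.toHomeomorph (S.shift hγf (E.toHomeomorph.symm p))

variable (hγf : ∀ θ, f (θ, γ θ) = (α θ, γ (α θ)))

lemma collapse_extension (p : Θ × Icc a b) :
    collapse E (extension E hγf p) = f (collapse E p) := by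
  obtain ⟨z, rfl⟩ := E.toHomeomorph.surjective p
  rw [extension, collapse_toHomeomorph, Homeomorph.symm_apply_apply, collapse_toHomeomorph]
  rfl

lemma isFactorMap_collapse : IsFactorMap (extension E hγf) f (collapse E) :=
  ⟨continuous_collapse E, surjective_collapse E, funext (collapse_extension E hγf)⟩

lemma forcedIncreasing_extension (hf : ForcedIncreasing α f) :
    ForcedIncreasing α (extension E hγf) := by
  have hfst (p : Θ × Icc a b) : (extension E hγf p).1 = α p.1 := calc
    (extension E hγf p).1 = (f (collapse E p)).1 := by rw [← collapse_extension E hγf]; rfl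
    _ = α p.1 := hf.2.1 _
  have := continuous_shift (S := S) hγf hf.1
  refine ⟨by unfold extension; fun_prop, hfst, fun θ => strictMono_of_le_iff_le fun x y => ?_⟩
  have hsymm : (E.toHomeomorph.symm (θ, x)).1.1 = (E.toHomeomorph.symm (θ, y)).1.1 := by
    rw [E.fst_symm_apply, E.fst_symm_apply]
  rw [extension, extension, E.snd_le_iff, shift_le_shift_iff hγf hf hsymm,
    E.symm_le_symm_iff (θ, x) (θ, y) rfl]
  rw [← E.fst_apply, ← E.fst_apply]
  exact (hfst (θ, x)).trans (hfst (θ, y)).symm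

lemma image_extension_preimage_collapse :
    extension E hγf '' (collapse E ⁻¹' curveGraph γ) = collapse E ⁻¹' curveGraph γ := by
  refine Subset.antisymm ?_ fun p hp => ?_
  · rintro _ ⟨p, hp, rfl⟩
    have hp : collapse E p = (p.1, γ p.1) := Prod.ext rfl hp
    rw [mem_preimage, collapse_extension, hp, hγf]
    rfl
  · obtain ⟨w, rfl⟩ := E.toHomeomorph.surjective p
    rw [mem_preimage, collapse_toHomeomorph] at hp
    obtain ⟨z, hz, rfl⟩ := exists_shift_eq hγf w hp
    refine ⟨E.toHomeomorph z, ?_, by rw [extension, Homeomorph.symm_apply_apply]⟩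
    rwa [mem_preimage, collapse_toHomeomorph]

lemma blowUpConclusion (hf : ForcedIncreasing α f) :
    BlowUpConclusion α f γ (extension E hγf) (collapse E) := by
  refine ⟨isFactorMap_collapse E hγf, fun _ => rfl, forcedIncreasing_extension E hγf hf,
    monotone_collapse E, injOn_collapse E, ⟨range S.singularPt, ?_, countable_range _, ?_, ?_⟩,
    fun η hη => not_curveGraph_subset E hη⟩
  · rintro _ ⟨k, rfl⟩
    rfl
  · rintro _ ⟨k, rfl⟩
    exact preimage_collapse_singularPt E k
  · exact fun p hp => preimage_collapse_of_notMem_range E hp.2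

end Collapse

end JumpFamily

lemma isClosed_curveGraph {Θ : Type*} [TopologicalSpace Θ] {I : Set ℝ} {γ : Θ → I}
    (hγ : Continuous γ) : IsClosed (curveGraph γ) :=
  isClosed_eq continuous_snd (hγ.comp continuous_fst)

lemma pinched_iff_nonempty_singletonLocus {Θ L : Type*} {K : Set (Θ × L)} :
    Pinched K ↔ (singletonLocus Prod.fst K).Nonempty := by
  refine exists_congr fun θ => ⟨?_, ?_⟩
  · rintro ⟨x, hx, hunique⟩
    refine ⟨(θ, x), ⟨hx, rfl⟩, ?_⟩
    rintro ⟨θ, y⟩ ⟨hy, rfl⟩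
    exact Prod.ext rfl (hunique y hy)
  · rintro ⟨⟨θ, x⟩, ⟨hx, rfl⟩, hunique⟩
    exact ⟨x, hx, fun y hy => congrArg Prod.snd (hunique (θ, y) ⟨hy, rfl⟩)⟩

lemma MinimalHomeo.exists_curveGraph_subset_of_isAPMinimal {Θ : Type*} [MetricSpace Θ]
    [CompactSpace Θ] {I : Set ℝ} [CompactSpace I] {α : Θ ≃ₜ Θ} {F : Θ × I → Θ × I}
    {K : Set (Θ × I)} (hα : MinimalHomeo α) (hF : Semiconj Prod.fst F α) (hK : IsClosed K)
    (hpinched : Pinched K) (hAP : IsAPMinimal F (singletonFiberClosure Prod.fst K)) :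
    ∃ η : Θ → I, Continuous η ∧ curveGraph η ⊆ K := by
  obtain ⟨s, hs, hsK⟩ := hα.exists_section_of_isAPMinimal continuous_fst hF hK
    (pinched_iff_nonempty_singletonLocus.1 hpinched) hAP
  refine ⟨fun θ => (s θ).2, by fun_prop, ?_⟩
  rintro ⟨θ, x⟩ hx
  obtain rfl : x = (s θ).2 := hx
  obtain ⟨hmem, hfst⟩ := hsK θ
  rwa [show s θ = (θ, (s θ).2) from Prod.ext hfst rfl] at hmem

/-- the blow-up construction over an almost periodic minimal
homeomorphism of an infinite compact metric space. -/
theorem stmt0 {Θ : Type} [MetricSpace Θ] [CompactSpace Θ] [Infinite Θ]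
    (α : Θ ≃ₜ Θ) (hap : AlmostPeriodicHomeo α) (hmin : MinimalHomeo α)
    {I : Set ℝ} (hIcomp : IsCompact I) (hIconn : I.OrdConnected)
    (f : Θ × ↥I → Θ × ↥I) (hf : ForcedIncreasing (⇑α) f)
    (γ : Θ → ↥I) (hγc : Continuous γ) (hγint : ∀ θ : Θ, (γ θ : ℝ) ∈ interior I)
    (hγinv : ∀ θ : Θ, f (θ, γ θ) = (α θ, γ (α θ))) :
    ∃ fhat h : Θ × ↥I → Θ × ↥I,
      BlowUpConclusion (⇑α) f γ fhat h ∧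
      Pinched (h ⁻¹' curveGraph γ) ∧
      ∃ M : Set (Θ × ↥I), M ⊆ h ⁻¹' curveGraph γ ∧
        IsAAMinimal fhat M ∧ ¬ IsAPMinimal fhat M := by
  obtain ⟨θ₀⟩ : Nonempty Θ := inferInstance
  obtain ⟨a, b, rfl⟩ : ∃ a b, I = Icc a b := ⟨_, _, eq_Icc_of_connected_compact
    ⟨⟨γ θ₀, (γ θ₀).2⟩, hIconn.isPreconnected⟩ hIcomp⟩
  simp only [interior_Icc] at hγint
  have := hmin.perfectSpace
  obtain ⟨S⟩ := hf.nonempty_jumpFamily hγc hγinv θ₀ (hmin.injective_orbit θ₀)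
  obtain ⟨E⟩ := JumpFamily.nonempty_fiberOrderHomeo_blowUp (S := S)
    ((hγint θ₀).1.trans (hγint θ₀).2) hγint
  let fhat := JumpFamily.extension E hγinv
  let K := JumpFamily.collapse E ⁻¹' curveGraph γ
  obtain ⟨hfhat_cont, hfhat, -⟩ := JumpFamily.forcedIncreasing_extension E hγinv hf
  have hK : IsClosed K := (isClosed_curveGraph hγc).preimage (JumpFamily.continuous_collapse E)
  have hpinched : Pinched K := (exists_notMem_range_of_countable S.base).imp fun _ =>
    JumpFamily.existsUnique_collapse_mem_curveGraph E
  refine ⟨fhat, JumpFamily.collapse E, JumpFamily.blowUpConclusion E hγinv hf, hpinched,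
    singletonFiberClosure Prod.fst K, singletonFiberClosure_subset hK, ?_, fun hAP => ?_⟩
  · exact hmin.isAAMinimal_singletonFiberClosure hap hfhat_cont continuous_fst hfhat hK
      (JumpFamily.image_extension_preimage_collapse E hγinv)
      (pinched_iff_nonempty_singletonLocus.1 hpinched)
  · obtain ⟨η, hη, hηK⟩ := hmin.exists_curveGraph_subset_of_isAPMinimal hfhat hK hpinched hAP
    exact JumpFamily.not_curveGraph_subset E hη hηK

end
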